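/- For all integers d, k with 1 < k < d, the growth constant of (d,k)-fixed polyominoids exists: the limit μ^XD_{(d,k)} = lim_{n→∞} (c^XD_{(d,k),n})^{1/n} exists. -/

import Mathlib

open Filter

/-- A `k`-face of the hypercubic lattice `ℤ^d`: an orientation set `S ⊆ {1,…,d}`
together with a base vertex `v ∈ ℤ^d`. -/
abbrev Face (d : ℕ) := Finset (Fin d) × (Fin d → ℤ)

/-- The boundary `(k-1)`-edges of a `k`-face `(S, v)`: the `(k-1)`-faces
`(S \ {i}, v)` and `(S \ {i}, v + e_i)` for `i ∈ S`. -/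
def faceEdges {d : ℕ} (f : Face d) : Finset (Face d) :=
  f.1.biUnion fun i =>
    {(f.1.erase i, f.2), (f.1.erase i, f.2 + Pi.single i 1)}

/-- Two faces are adjacent if they are distinct and share a common boundary edge. -/
def FaceAdj {d : ℕ} (f g : Face d) : Prop :=
  f ≠ g ∧ ∃ e, e ∈ faceEdges f ∧ e ∈ faceEdges g

/-- A set of faces is connected with respect to adjacency. -/
def ConnectedFaces {d : ℕ} (M : Finset (Face d)) : Prop :=
  ∀ f ∈ M, ∀ g ∈ M, Relation.ReflTransGen (fun a b => a ∈ M ∧ b ∈ M ∧ FaceAdj a b) f g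

/-- A `(d,k)`-self-avoiding manifold of `k`-area `n`: a connected set of `n` `k`-faces
such that every `(k-1)`-edge bounds at most two of its `k`-faces. -/
def IsSAM (d k n : ℕ) (M : Finset (Face d)) : Prop :=
  M.card = n ∧ (∀ f ∈ M, f.1.card = k) ∧ ConnectedFaces M ∧
    ∀ e : Face d, (M.filter fun f => e ∈ faceEdges f).card ≤ 2

/-- A closed `(d,k)`-self-avoiding manifold: every boundary edge of every face
is shared by exactly two faces. -/
def IsClosedSAM (d k n : ℕ) (M : Finset (Face d)) : Prop :=
  IsSAM d k n M ∧ ∀ f ∈ M, ∀ e ∈ faceEdges f,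
    (M.filter fun g => e ∈ faceEdges g).card = 2

/-- A `(d,k)`-fixed polyominoid of `k`-area `n`: a connected set of `n` `k`-faces. -/
def IsXD (d k n : ℕ) (M : Finset (Face d)) : Prop :=
  M.card = n ∧ (∀ f ∈ M, f.1.card = k) ∧ ConnectedFaces M

/-- Translation of a face by a lattice vector. -/
def translateFace {d : ℕ} (t : Fin d → ℤ) (f : Face d) : Face d := (f.1, f.2 + t)

/-- Two sets of faces are translation-equivalent. -/
def TransEquiv {d : ℕ} (A B : Finset (Face d)) : Prop :=
  ∃ t : Fin d → ℤ, A.image (translateFace t) = B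

/-- The number of `(d,k)`-self-avoiding manifolds of `k`-area `n`, up to translation. -/
noncomputable def samCount (d k n : ℕ) : ℕ :=
  Nat.card (Quot fun A B : {M : Finset (Face d) // IsSAM d k n M} =>
    TransEquiv A.val B.val)

/-- The number of closed `(d,k)`-self-avoiding manifolds of `k`-area `n`, up to
translation. -/
noncomputable def closedSamCount (d k n : ℕ) : ℕ :=
  Nat.card (Quot fun A B : {M : Finset (Face d) // IsClosedSAM d k n M} =>
    TransEquiv A.val B.val)

/-- The number of `(d,k)`-fixed polyominoids of `k`-area `n`, up to translation. -/
noncomputable def xdCount (d k n : ℕ) : ℕ :=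
  Nat.card (Quot fun A B : {M : Finset (Face d) // IsXD d k n M} =>
    TransEquiv A.val B.val)

/-!
Write `c n` for the number of `(d,k)`-polyominoids of area `n` and order faces by their height, the
coordinate sum of the base vertex. From any face one can move to an adjacent face of height one more
while exchanging one direction of its orientation, so `k` such moves lead from the highest face of
`A` to a face whose orientation is that of the lowest face of `B`; a translate of `B` can then be
attached on top. Since `A`, the connecting faces and the translate of `B` lie strictly above one
another and have known areas, `A` and `B` can be recovered, whence `c m * c n ≤ c (m + k + n)`.
A polyominoid of area `n + 1` is swept out by a closed walk of length `2 * n`, which bounds `c`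
exponentially, and Fekete's lemma applies to `n ↦ -log c (n - k)`.
-/

open scoped Pointwise

/-! ### Fekete's lemma with a shift -/

section Fekete

variable {c : ℕ → ℝ} {k : ℕ} {K : ℝ}

theorem subadditive_neg_log_comp_sub (hc₀ : c 0 = 1) (hmono : Monotone c)
    (hmul : ∀ ⦃m n⦄, 0 < m → 0 < n → c m * c n ≤ c (m + k + n)) :
    Subadditive fun n => -Real.log (c (n - k)) := by
  intro m n
  have hpos (n : ℕ) : 0 < c n := zero_lt_one.trans_le (hc₀ ▸ hmono n.zero_le)
  suffices h : c (m - k) * c (n - k) ≤ c (m + n - k) by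
    rw [← neg_add, ← Real.log_mul (hpos _).ne' (hpos _).ne', neg_le_neg_iff]
    exact Real.log_le_log (mul_pos (hpos _) (hpos _)) h
  rcases le_or_gt m k with hm | hm
  · rw [Nat.sub_eq_zero_of_le hm, hc₀, one_mul]
    exact hmono (by omega)
  rcases le_or_gt n k with hn | hn
  · rw [Nat.sub_eq_zero_of_le hn, hc₀, mul_one]
    exact hmono (by omega)
  · calc c (m - k) * c (n - k) ≤ c (m - k + k + (n - k)) := hmul (by omega) (by omega)
      _ = c (m + n - k) := by congr 1; omega

theorem bddBelow_range_neg_log_comp_sub_div (hc : ∀ n, 1 ≤ c n) (hK : ∀ n, c n ≤ K ^ n) :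
    BddBelow (Set.range fun n : ℕ => -Real.log (c (n - k)) / n) := by
  have hK₁ : 1 ≤ K := by simpa using (hc 1).trans (hK 1)
  refine ⟨-Real.log K, ?_⟩
  rintro _ ⟨n, rfl⟩
  have hlog : Real.log (c (n - k)) ≤ n * Real.log K := by
    rw [← Real.log_pow]
    exact Real.log_le_log (zero_lt_one.trans_le (hc _))
      ((hK _).trans (pow_le_pow_right₀ hK₁ (n.sub_le k)))
  rcases n.eq_zero_or_pos with rfl | hn
  · simpa using Real.log_nonneg hK₁
  · rw [le_div_iff₀ (Nat.cast_pos.2 hn)]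
    linarith

theorem exists_tendsto_rpow_one_div_of_mul_le (hc₀ : c 0 = 1) (hmono : Monotone c)
    (hmul : ∀ ⦃m n⦄, 0 < m → 0 < n → c m * c n ≤ c (m + k + n)) (hK : ∀ n, c n ≤ K ^ n) :
    ∃ μ : ℝ, 0 < μ ∧ Tendsto (fun n : ℕ => c n ^ (1 / (n : ℝ))) atTop (nhds μ) := by
  have hc (n : ℕ) : 1 ≤ c n := hc₀ ▸ hmono n.zero_le
  have hsub := subadditive_neg_log_comp_sub hc₀ hmono hmul
  have hlim := (tendsto_add_atTop_iff_nat k).2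
    (hsub.tendsto_lim (bddBelow_range_neg_log_comp_sub_div hc hK))
  have hratio : Tendsto (fun n : ℕ => 1 + (k : ℝ) / n) atTop (nhds (1 + 0)) :=
    tendsto_const_nhds.add (tendsto_const_div_atTop_nhds_zero_nat _)
  refine ⟨Real.exp (-hsub.lim), Real.exp_pos _, ?_⟩
  have hexp := (Real.continuous_exp.tendsto _).comp (hlim.mul hratio).neg
  rw [add_zero, mul_one] at hexp
  refine hexp.congr' ?_
  filter_upwards [eventually_gt_atTop 0] with n hn
  have hn₀ : (n : ℝ) ≠ 0 := Nat.cast_ne_zero.2 hn.ne'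
  have hnk : (n : ℝ) + k ≠ 0 := by positivity
  simp only [Function.comp_apply, Nat.add_sub_cancel, Nat.cast_add]
  rw [Real.rpow_def_of_pos (zero_lt_one.trans_le (hc n))]
  congr 1
  field_simp

end Fekete

/-! ### Closed walks covering a connected graph -/

section Walks

variable {V : Type*} {G : SimpleGraph V}

theorem exists_walk_mem_support_iff_eq_or {u v w x : V} (p : G.Walk v w) (hu : u ∈ p.support)
    (hux : G.Adj u x) :
    ∃ q : G.Walk v w, q.length = p.length + 2 ∧ ∀ y, y ∈ q.support ↔ y = x ∨ y ∈ p.support := by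
  obtain ⟨p₁, p₂, rfl⟩ := SimpleGraph.Walk.mem_support_iff_exists_append.1 hu
  refine ⟨p₁.append (.cons hux (.cons hux.symm p₂)), ?_, fun y => ?_⟩
  · simp only [SimpleGraph.Walk.length_append, SimpleGraph.Walk.length_cons]
    omega
  · have hup₁ := p₁.end_mem_support
    simp only [SimpleGraph.Walk.mem_support_append_iff, SimpleGraph.Walk.support_cons,
      List.mem_cons]
    grind

theorem exists_closed_walk_length_eq_two_mul (hG : G.Preconnected) {n : ℕ}
    (hn : Nat.card V = n + 1) (v : V) :
    ∃ p : G.Walk v v, p.length = 2 * n ∧ ∀ x, x ∈ p.support := by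
  classical
  have : Finite V := Nat.finite_of_card_ne_zero (by omega)
  have := Fintype.ofFinite V
  have hpartial : ∀ j ≤ n,
      ∃ p : G.Walk v v, p.length = 2 * j ∧ p.support.toFinset.card = j + 1 := by
    intro j hj
    induction j with
    | zero => exact ⟨.nil, by simp⟩
    | succ j ih =>
      obtain ⟨p, hlen, hcard⟩ := ih (by omega)
      obtain ⟨y, -, hy⟩ : ∃ y ∈ Finset.univ, y ∉ p.support.toFinset :=
        Finset.exists_mem_notMem_of_card_lt_card (by
          rw [hcard, Finset.card_univ, ← Nat.card_eq_fintype_card]; omega)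
      obtain ⟨e, -, hin, hout⟩ := (hG v y).some.exists_boundary_dart {x | x ∈ p.support}
        p.start_mem_support (by simpa using hy)
      obtain ⟨q, hqlen, hq⟩ := exists_walk_mem_support_iff_eq_or p hin e.adj
      have hsupp : q.support.toFinset = insert e.snd p.support.toFinset := by
        ext x
        simp [hq]
      refine ⟨q, by omega, ?_⟩
      rw [hsupp, Finset.card_insert_of_notMem (by simpa using hout), hcard]
  obtain ⟨p, hlen, hcard⟩ := hpartial n le_rfl
  have huniv : p.support.toFinset = Finset.univ :=
    Finset.eq_univ_of_card _ (by rw [hcard, ← Nat.card_eq_fintype_card, hn])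
  exact ⟨p, hlen, fun x => List.mem_toFinset.1 (huniv ▸ Finset.mem_univ x)⟩

theorem exists_scanl_eq_support {ι : Type*} {step : V → ι → V}
    (hstep : ∀ ⦃x y⦄, G.Adj x y → ∃ i, step x i = y) {v w : V} (p : G.Walk v w) :
    ∃ L : List ι, L.length = p.length ∧ L.scanl step v = p.support := by
  induction p with
  | nil => exact ⟨[], by simp⟩
  | cons hadj p ih =>
    obtain ⟨i, rfl⟩ := hstep hadj
    obtain ⟨L, hlen, hscan⟩ := ih
    exact ⟨i :: L, by simp [hlen], by simp [hscan]⟩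

end Walks

/-! ### The face graph -/

variable {d k m n : ℕ} {f g e : Face d} {A B M : Finset (Face d)} {t : Fin d → ℤ}

theorem mem_faceEdges :
    e ∈ faceEdges f ↔
      ∃ i ∈ f.1, e = (f.1.erase i, f.2) ∨ e = (f.1.erase i, f.2 + Pi.single i 1) := by
  simp [faceEdges]

theorem FaceAdj.symm (h : FaceAdj f g) : FaceAdj g f :=
  ⟨h.1.symm, h.2.imp fun _ => And.symm⟩

/-- The adjacency graph on all faces of the lattice. -/
def faceGraph (d : ℕ) : SimpleGraph (Face d) where
  Adj := FaceAdj
  symm := ⟨fun _ _ => FaceAdj.symm⟩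
  loopless := ⟨fun _ h => h.1 rfl⟩

theorem connectedFaces_iff_preconnected :
    ConnectedFaces M ↔ ((faceGraph d).induce (M : Set (Face d))).Preconnected := by
  constructor
  · rintro hM ⟨f, hf⟩ ⟨g, hg⟩
    have hreach : ∀ g', Relation.ReflTransGen (fun a b => a ∈ M ∧ b ∈ M ∧ FaceAdj a b) f g' →
        ∃ hg' : g' ∈ M, ((faceGraph d).induce (M : Set (Face d))).Reachable ⟨f, hf⟩ ⟨g', hg'⟩ := by
      intro g' hfg'
      induction hfg' with
      | refl => exact ⟨hf, .refl _⟩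
      | tail _ hab ih =>
        obtain ⟨ha, hfa⟩ := ih
        have hadj : ((faceGraph d).induce (M : Set (Face d))).Adj ⟨_, ha⟩ ⟨_, hab.2.1⟩ := hab.2.2
        exact ⟨hab.2.1, hfa.trans hadj.reachable⟩
    exact (hreach g (hM f hf g hg)).2
  · intro hM f hf g hg
    have hfg := hM ⟨f, hf⟩ ⟨g, hg⟩
    rw [SimpleGraph.reachable_iff_reflTransGen] at hfg
    exact hfg.lift Subtype.val fun a b hab => ⟨a.2, b.2, hab⟩

theorem connectedFaces_singleton (f : Face d) : ConnectedFaces {f} := by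
  simp [ConnectedFaces, Relation.ReflTransGen.refl]

theorem ConnectedFaces.union (hA : ConnectedFaces A) (hB : ConnectedFaces B) (hf : f ∈ A)
    (hg : g ∈ B) (hfg : FaceAdj f g) : ConnectedFaces (A ∪ B) := by
  rw [connectedFaces_iff_preconnected] at hA hB ⊢
  rw [Finset.coe_union]
  exact (SimpleGraph.connected_induce_union hA hB hf hg hfg).preconnected

theorem isXD_singleton (f : Face d) : IsXD d f.1.card 1 {f} :=
  ⟨Finset.card_singleton f, by simp, connectedFaces_singleton f⟩

/-! ### Translations -/

/-- The action of the lattice on its faces by translation; through the pointwise action on finsets,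
`TransEquiv A B` unfolds to `∃ t, t +ᵥ A = B`. -/
instance Face.instAddAction : AddAction (Fin d → ℤ) (Face d) where
  vadd := translateFace
  zero_vadd f := Prod.ext rfl (add_zero f.2)
  add_vadd s t f := Prod.ext rfl (by simp only [translateFace, HVAdd.hVAdd]; abel)

theorem Face.fst_vadd (t : Fin d → ℤ) (f : Face d) : (t +ᵥ f).1 = f.1 := rfl

theorem Face.snd_vadd (t : Fin d → ℤ) (f : Face d) : (t +ᵥ f).2 = f.2 + t := rfl

theorem vadd_mem_faceEdges (t : Fin d → ℤ) (he : e ∈ faceEdges f) :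
    t +ᵥ e ∈ faceEdges (t +ᵥ f) := by
  rw [mem_faceEdges] at he ⊢
  obtain ⟨i, hi, rfl | rfl⟩ := he
  · exact ⟨i, hi, .inl rfl⟩
  · exact ⟨i, hi, .inr (Prod.ext rfl (add_right_comm _ _ _))⟩

theorem FaceAdj.vadd (t : Fin d → ℤ) (h : FaceAdj f g) : FaceAdj (t +ᵥ f) (t +ᵥ g) := by
  obtain ⟨hne, e, hef, heg⟩ := h
  exact ⟨fun h => hne (vadd_left_cancel t h), t +ᵥ e, vadd_mem_faceEdges t hef,
    vadd_mem_faceEdges t heg⟩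

theorem ConnectedFaces.vadd (t : Fin d → ℤ) (hM : ConnectedFaces M) : ConnectedFaces (t +ᵥ M) := by
  intro _ hf' _ hg'
  obtain ⟨f, hf, rfl⟩ := Finset.mem_vadd_finset.1 hf'
  obtain ⟨g, hg, rfl⟩ := Finset.mem_vadd_finset.1 hg'
  exact (hM f hf g hg).lift (t +ᵥ ·) fun a b ⟨ha, hb, hab⟩ =>
    ⟨Finset.vadd_mem_vadd_finset ha, Finset.vadd_mem_vadd_finset hb, hab.vadd t⟩

theorem IsXD.vadd (t : Fin d → ℤ) (hM : IsXD d k n M) : IsXD d k n (t +ᵥ M) := by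
  refine ⟨by rw [Finset.card_vadd_finset, hM.1], fun _ hf' => ?_, hM.2.2.vadd t⟩
  obtain ⟨f, hf, rfl⟩ := Finset.mem_vadd_finset.1 hf'
  exact hM.2.1 f hf

theorem TransEquiv.symm (h : TransEquiv A B) : TransEquiv B A := by
  obtain ⟨t, rfl⟩ := h
  exact ⟨-t, neg_vadd_vadd t A⟩

theorem TransEquiv.trans {C : Finset (Face d)} (hAB : TransEquiv A B) (hBC : TransEquiv B C) :
    TransEquiv A C := by
  obtain ⟨s, rfl⟩ := hAB
  obtain ⟨t, rfl⟩ := hBC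
  exact ⟨t + s, add_vadd t s A⟩

/-- The translation equivalence on polyominoids, whose classes are counted by `xdCount`. -/
instance xdSetoid (d k n : ℕ) : Setoid {M : Finset (Face d) // IsXD d k n M} where
  r A B := TransEquiv A.1 B.1
  iseqv := ⟨fun A => ⟨0, zero_vadd (Fin d → ℤ) A.1⟩, TransEquiv.symm, TransEquiv.trans⟩

theorem xdCount_eq_card_quotient (d k n : ℕ) :
    xdCount d k n = Nat.card (Quotient (xdSetoid d k n)) := rfl

/-! ### Exponential upper bound -/

/-- A change of orientation together with a displacement by at most one in every coordinate:
enough to reach all faces adjacent to a given one. -/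
abbrev FaceMove (d : ℕ) := Finset (Fin d) × Set.Icc (-1 : Fin d → ℤ) 1

instance : Nonempty (FaceMove d) := ⟨(∅, ⟨0, by simp⟩)⟩

/-- The face reached from `f` by the move `a`. -/
def Face.move (f : Face d) (a : FaceMove d) : Face d := (a.1, f.2 + a.2)

theorem snd_mem_Icc_of_mem_faceEdges (he : e ∈ faceEdges f) : e.2 ∈ Set.Icc f.2 (f.2 + 1) := by
  obtain ⟨i, -, rfl | rfl⟩ := mem_faceEdges.1 he
  · simp
  · have hsingle : Pi.single i (1 : ℤ) ∈ Set.Icc (0 : Fin d → ℤ) 1 :=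
      ⟨Pi.single_nonneg.2 zero_le_one, fun j => by rcases eq_or_ne j i with rfl | h <;> simp [*]⟩
    exact ⟨le_add_of_nonneg_right hsingle.1, add_le_add_right hsingle.2 _⟩

theorem FaceAdj.exists_move_eq (h : FaceAdj f g) : ∃ a, f.move a = g := by
  obtain ⟨-, e, hef, heg⟩ := h
  have hf := snd_mem_Icc_of_mem_faceEdges hef
  have hg := snd_mem_Icc_of_mem_faceEdges heg
  refine ⟨(g.1, ⟨g.2 - f.2, fun i => ?_, fun i => ?_⟩), Prod.ext rfl (add_sub_cancel f.2 g.2)⟩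
  · have := hf.1 i
    have := hg.2 i
    simp only [Pi.neg_apply, Pi.one_apply, Pi.sub_apply, Pi.add_apply] at *
    omega
  · have := hf.2 i
    have := hg.1 i
    simp only [Pi.one_apply, Pi.sub_apply, Pi.add_apply] at *
    omega

theorem ConnectedFaces.exists_scanl_move_eq (hM : ConnectedFaces M) (hcard : M.card = n + 1)
    (hf : f ∈ M) :
    ∃ L : List.Vector (FaceMove d) (2 * n), (L.toList.scanl Face.move f).toFinset = M := by
  rw [connectedFaces_iff_preconnected] at hM
  obtain ⟨p, hlen, hp⟩ := exists_closed_walk_length_eq_two_mul hM (by simpa using hcard) ⟨f, hf⟩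
  obtain ⟨L, hL, hscan⟩ := exists_scanl_eq_support
    (fun _ _ (h : (faceGraph d).Adj _ _) => FaceAdj.exists_move_eq h)
    (p.map (SimpleGraph.Embedding.induce (G := faceGraph d) (M : Set (Face d))).toHom)
  refine ⟨⟨L, hL.trans ((SimpleGraph.Walk.length_map _ p).trans hlen)⟩, ?_⟩
  have hmap : L.scanl Face.move f = p.support.map Subtype.val :=
    hscan.trans (SimpleGraph.Walk.support_map _ p)
  ext g
  simp only [List.Vector.toList, hmap, List.mem_toFinset, List.mem_map]
  exact ⟨by rintro ⟨x, -, rfl⟩; exact x.2, fun hg => ⟨⟨g, hg⟩, hp _, rfl⟩⟩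

/-- The faces visited from a base face with vertex `0` by a list of moves. -/
def codedFaces (c : Finset (Fin d) × List.Vector (FaceMove d) n) : Finset (Face d) :=
  (c.2.toList.scanl Face.move (c.1, 0)).toFinset

theorem IsXD.exists_transEquiv_codedFaces (hM : IsXD d k (n + 1) M) :
    ∃ c : Finset (Fin d) × List.Vector (FaceMove d) (2 * n), TransEquiv M (codedFaces c) := by
  obtain ⟨f, hf⟩ : M.Nonempty := Finset.card_pos.1 (by rw [hM.1]; omega)
  have hM' := hM.vadd (-f.2)
  obtain ⟨L, hL⟩ := hM'.2.2.exists_scanl_move_eq hM'.1 (Finset.vadd_mem_vadd_finset hf)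
  have hbase : -f.2 +ᵥ f = (f.1, 0) := Prod.ext rfl (add_neg_cancel f.2)
  rw [hbase] at hL
  exact ⟨(f.1, L), -f.2, hL.symm⟩

theorem exists_injective_code (d k n : ℕ) :
    ∃ φ : Quotient (xdSetoid d k (n + 1)) → Finset (Fin d) × List.Vector (FaceMove d) (2 * n),
      Function.Injective φ := by
  choose code hcode using fun A : {M // IsXD d k (n + 1) M} => A.2.exists_transEquiv_codedFaces
  refine ⟨fun q => code q.out, fun p q hpq => Quotient.out_equiv_out.1 ?_⟩
  have hp := hcode p.out
  rw [show code p.out = code q.out from hpq] at hp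
  exact hp.trans (hcode q.out).symm

theorem subsingleton_quotient_xdSetoid_zero (d k : ℕ) :
    Subsingleton (Quotient (xdSetoid d k 0)) := by
  have : Subsingleton {M : Finset (Face d) // IsXD d k 0 M} := ⟨fun A B =>
    Subtype.ext ((Finset.card_eq_zero.1 A.2.1).trans (Finset.card_eq_zero.1 B.2.1).symm)⟩
  infer_instance

instance finite_quotient_xdSetoid (d k n : ℕ) : Finite (Quotient (xdSetoid d k n)) := by
  cases n with
  | zero =>
    have := subsingleton_quotient_xdSetoid_zero d k
    infer_instance
  | succ n =>
    obtain ⟨φ, hφ⟩ := exists_injective_code d k n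
    exact Finite.of_injective φ hφ

theorem xdCount_zero (d k : ℕ) : xdCount d k 0 = 1 := by
  have := subsingleton_quotient_xdSetoid_zero d k
  have : Nonempty (Quotient (xdSetoid d k 0)) :=
    ⟨⟦⟨∅, Finset.card_empty, by simp, by simp [ConnectedFaces]⟩⟧⟩
  rw [xdCount_eq_card_quotient, Nat.card_unique]

theorem xdCount_succ_le (d k n : ℕ) :
    xdCount d k (n + 1) ≤ 2 ^ d * Fintype.card (FaceMove d) ^ (2 * n) := by
  obtain ⟨φ, hφ⟩ := exists_injective_code d k n
  rw [xdCount_eq_card_quotient]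
  refine (Nat.card_le_card_of_injective φ hφ).trans_eq ?_
  rw [Nat.card_eq_fintype_card, Fintype.card_prod, card_vector, Fintype.card_finset,
    Fintype.card_fin]

theorem exists_forall_xdCount_le_pow (d k : ℕ) : ∃ K : ℕ, ∀ n, xdCount d k n ≤ K ^ n := by
  refine ⟨2 ^ d * Fintype.card (FaceMove d) ^ 2, fun n => ?_⟩
  cases n with
  | zero => rw [xdCount_zero, pow_zero]
  | succ n =>
    calc xdCount d k (n + 1) ≤ 2 ^ d * Fintype.card (FaceMove d) ^ (2 * n) := xdCount_succ_le d k n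
      _ ≤ (2 ^ d) ^ (n + 1) * (Fintype.card (FaceMove d) ^ 2) ^ (n + 1) := by
        rw [pow_mul]
        exact Nat.mul_le_mul (le_self_pow Nat.one_le_two_pow n.succ_ne_zero)
          (Nat.pow_le_pow_right (pow_pos Fintype.card_pos 2) n.le_succ)
      _ = (2 ^ d * Fintype.card (FaceMove d) ^ 2) ^ (n + 1) := (mul_pow _ _ _).symm

/-! ### Stacking by height -/

/-- The coordinate sum of the base vertex, the statistic that separates stacked polyominoids. -/
def Face.height (f : Face d) : ℤ := ∑ i, f.2 i

theorem Face.height_vadd (t : Fin d → ℤ) (f : Face d) : (t +ᵥ f).height = f.height + ∑ i, t i := by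
  simp [Face.height, Face.snd_vadd, Finset.sum_add_distrib]

/-- Every face of `A` has smaller height than every face of `B`. -/
def StrictlyBelow (A B : Finset (Face d)) : Prop :=
  ∀ x ∈ A, ∀ y ∈ B, x.height < y.height

theorem StrictlyBelow.disjoint (h : StrictlyBelow A B) : Disjoint A B :=
  Finset.disjoint_left.2 fun x hxA hxB => (h x hxA x hxB).false

theorem StrictlyBelow.vadd (t : Fin d → ℤ) (h : StrictlyBelow A B) :
    StrictlyBelow (t +ᵥ A) (t +ᵥ B) := by
  intro _ hx' _ hy'
  obtain ⟨x, hx, rfl⟩ := Finset.mem_vadd_finset.1 hx'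
  obtain ⟨y, hy, rfl⟩ := Finset.mem_vadd_finset.1 hy'
  rw [Face.height_vadd, Face.height_vadd]
  exact add_lt_add_left (h x hx y hy) _

theorem StrictlyBelow.subset_or_subset {A' B' : Finset (Face d)} (h : StrictlyBelow A B)
    (h' : StrictlyBelow A' B') (hU : A ∪ B = A' ∪ B') : A ⊆ A' ∨ A' ⊆ A := by
  by_contra! hcon
  obtain ⟨a, haA, haA'⟩ := Finset.not_subset.1 hcon.1
  obtain ⟨b, hbA', hbA⟩ := Finset.not_subset.1 hcon.2
  have haB' : a ∈ B' :=
    (Finset.mem_union.1 (hU ▸ Finset.mem_union_left B haA)).resolve_left haA'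
  have hbB : b ∈ B := (Finset.mem_union.1 (hU ▸ Finset.mem_union_left B' hbA')).resolve_left hbA
  exact (h a haA b hbB).asymm (h' b hbA' a haB')

theorem StrictlyBelow.eq_and_eq_of_union_eq {A' B' : Finset (Face d)} (h : StrictlyBelow A B)
    (h' : StrictlyBelow A' B') (hcard : A.card = A'.card) (hU : A ∪ B = A' ∪ B') :
    A = A' ∧ B = B' := by
  have hA : A = A' := (h.subset_or_subset h' hU).elim
    (fun hsub => Finset.eq_of_subset_of_card_le hsub hcard.ge)
    (fun hsub => (Finset.eq_of_subset_of_card_le hsub hcard.le).symm)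
  refine ⟨hA, ?_⟩
  rw [← Finset.union_sdiff_cancel_left h.disjoint, hU, hA,
    Finset.union_sdiff_cancel_left h'.disjoint]

theorem StrictlyBelow.vadd_eq_and_vadd_eq {A' B' : Finset (Face d)} (h : StrictlyBelow A B)
    (h' : StrictlyBelow A' B') (hcard : A.card = A'.card) (hU : t +ᵥ (A ∪ B) = A' ∪ B') :
    t +ᵥ A = A' ∧ t +ᵥ B = B' := by
  rw [Finset.vadd_finset_union] at hU
  exact (h.vadd t).eq_and_eq_of_union_eq h' (by rw [Finset.card_vadd_finset, hcard]) hU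

theorem IsXD.union (hA : IsXD d k m A) (hB : IsXD d k n B) (hAB : StrictlyBelow A B)
    (hf : f ∈ A) (hg : g ∈ B) (hfg : FaceAdj f g) : IsXD d k (m + n) (A ∪ B) := by
  refine ⟨by rw [Finset.card_union_of_disjoint hAB.disjoint, hA.1, hB.1], fun x hx => ?_,
    hA.2.2.union hB.2.2 hf hg hfg⟩
  exact (Finset.mem_union.1 hx).elim (hA.2.1 x) (hB.2.1 x)

/-! ### Extending and concatenating -/

theorem faceAdj_insert_erase {i j : Fin d} (hi : i ∈ f.1) (hj : j ∉ f.1.erase i) :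
    FaceAdj f (insert j (f.1.erase i), f.2 + Pi.single i 1) := by
  refine ⟨fun h => ?_, (f.1.erase i, f.2 + Pi.single i 1), mem_faceEdges.2 ⟨i, hi, .inr rfl⟩,
    mem_faceEdges.2 ⟨j, Finset.mem_insert_self _ _, .inl ?_⟩⟩
  · simpa using congrFun (congrArg Prod.snd h) i
  · rw [Finset.erase_insert hj]

theorem Face.height_add_single (S : Finset (Fin d)) (v : Fin d → ℤ) (i : Fin d) :
    Face.height (S, v + Pi.single i 1) = Face.height (S, v) + 1 := by
  simp [Face.height, Finset.sum_add_distrib]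

theorem exists_card_insert_erase_sdiff {α : Type*} [DecidableEq α] {S T : Finset α}
    (hS : S.Nonempty) (hcard : S.card = T.card) :
    ∃ i ∈ S, ∃ j ∉ S.erase i, (insert j (S.erase i) \ T).card = (S \ T).card - 1 := by
  rcases (S \ T).eq_empty_or_nonempty with hST | ⟨i, hi⟩
  · obtain ⟨i, hi⟩ := hS
    exact ⟨i, hi, i, Finset.notMem_erase i S, by rw [Finset.insert_erase hi, hST]; rfl⟩
  · obtain ⟨j, hj⟩ : (T \ S).Nonempty := by
      rw [← Finset.card_pos, ← Finset.card_sdiff_comm hcard]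
      exact Finset.card_pos.2 ⟨i, hi⟩
    rw [Finset.mem_sdiff] at hj
    refine ⟨i, (Finset.mem_sdiff.1 hi).1, j, fun h => hj.2 (Finset.mem_of_mem_erase h), ?_⟩
    rw [Finset.insert_sdiff_of_mem _ hj.1, Finset.erase_sdiff_comm, Finset.card_erase_of_mem hi]

theorem exists_faceAdj_height_eq_add_one {T : Finset (Fin d)} (hf : f.1.Nonempty)
    (hcard : f.1.card = T.card) :
    ∃ g : Face d, FaceAdj f g ∧ g.height = f.height + 1 ∧ g.1.card = f.1.card ∧
      (g.1 \ T).card = (f.1 \ T).card - 1 := by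
  obtain ⟨i, hi, j, hj, hdist⟩ := exists_card_insert_erase_sdiff hf hcard
  exact ⟨_, faceAdj_insert_erase hi hj, Face.height_add_single _ _ i, by
    rw [Finset.card_insert_of_notMem hj, Finset.card_erase_add_one hi], hdist⟩

theorem IsXD.exists_extension (hk : 0 < k) {T : Finset (Fin d)} (hT : T.card = k) {r : ℕ}
    (hA : IsXD d k n A) (hf : f ∈ A) (hmax : ∀ x ∈ A, x.height ≤ f.height)
    (hr : (f.1 \ T).card ≤ r) :
    ∃ C : Finset (Face d), IsXD d k (n + r) (A ∪ C) ∧ StrictlyBelow A C ∧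
      ∃ g ∈ A ∪ C, (∀ x ∈ A ∪ C, x.height ≤ g.height) ∧ g.1 = T := by
  have hfk := hA.2.1 f hf
  induction r generalizing n A f with
  | zero =>
    have hsub : f.1 ⊆ T := Finset.sdiff_eq_empty_iff_subset.1 (Finset.card_eq_zero.1 (by omega))
    refine ⟨∅, by simpa using hA, by simp [StrictlyBelow], f, by simpa using hf,
      by simpa using hmax, Finset.eq_of_subset_of_card_le hsub (by omega)⟩
  | succ r ih =>
    obtain ⟨g, hfg, hgf, hg, hdist⟩ :=
      exists_faceAdj_height_eq_add_one (Finset.card_pos.1 (by omega)) (hfk.trans hT.symm)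
    have hbelow : StrictlyBelow A {g} := by
      simp only [StrictlyBelow, Finset.mem_singleton, forall_eq]
      exact fun x hx => by have := hmax x hx; omega
    have hgXD : IsXD d k 1 {g} := by simpa only [hg, hfk] using isXD_singleton g
    have hAg := hA.union hgXD hbelow hf (Finset.mem_singleton_self g) hfg
    obtain ⟨C, hXD, hAC, htop⟩ := ih hAg (by simp) (by
        simp only [Finset.mem_union, Finset.mem_singleton]
        rintro x (hx | rfl)
        · exact (hbelow x hx g (Finset.mem_singleton_self g)).le
        · exact le_rfl) (by omega) (hg.trans hfk)
    rw [Finset.union_assoc] at hXD htop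
    refine ⟨{g} ∪ C, by rwa [Nat.add_right_comm] at hXD, fun x hx y hy => ?_, htop⟩
    exact (Finset.mem_union.1 hy).elim (hbelow x hx y) (hAC x (Finset.mem_union_left _ hx) y)

theorem exists_faceAdj_vadd {b : Face d} (hne : f.1.Nonempty) (hfb : f.1 = b.1) :
    ∃ t : Fin d → ℤ, FaceAdj f (t +ᵥ b) ∧ (t +ᵥ b).height = f.height + 1 := by
  obtain ⟨i, hi⟩ := hne
  have hb : (f.2 + Pi.single i 1 - b.2) +ᵥ b = (insert i (f.1.erase i), f.2 + Pi.single i 1) :=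
    Prod.ext (by rw [Finset.insert_erase hi, Face.fst_vadd, hfb]) (add_sub_cancel _ _)
  refine ⟨f.2 + Pi.single i 1 - b.2, ?_, ?_⟩
  · rw [hb]
    exact faceAdj_insert_erase hi (Finset.notMem_erase i f.1)
  · rw [hb]
    exact Face.height_add_single _ _ i

/-- `U` is `A`, topped by `k` connecting faces, topped by a translate of `B`. -/
def IsConcat (k : ℕ) (A B U : Finset (Face d)) : Prop :=
  ∃ (C : Finset (Face d)) (t : Fin d → ℤ),
    C.card = k ∧ StrictlyBelow A C ∧ StrictlyBelow (A ∪ C) (t +ᵥ B) ∧ A ∪ C ∪ (t +ᵥ B) = U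

theorem IsConcat.transEquiv {A' B' U U' : Finset (Face d)} (h : IsConcat k A B U)
    (h' : IsConcat k A' B' U') (hcard : A.card = A'.card) (hU : TransEquiv U U') :
    TransEquiv A A' ∧ TransEquiv B B' := by
  obtain ⟨C, s, hC, hAC, hACB, rfl⟩ := h
  obtain ⟨C', s', hC', hAC', hACB', rfl⟩ := h'
  obtain ⟨t, ht⟩ := hU
  obtain ⟨hlow, hhigh⟩ := hACB.vadd_eq_and_vadd_eq hACB' (by
    rw [Finset.card_union_of_disjoint hAC.disjoint, Finset.card_union_of_disjoint hAC'.disjoint,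
      hcard, hC, hC']) ht
  exact ⟨⟨t, (hAC.vadd_eq_and_vadd_eq hAC' hcard hlow).1⟩,
    TransEquiv.trans ⟨s, rfl⟩ (.trans ⟨t, hhigh⟩ (.symm ⟨s', rfl⟩))⟩

theorem IsXD.exists_isConcat (hk : 0 < k) (hA : IsXD d k m A) (hB : IsXD d k n B)
    (hA₀ : A.Nonempty) (hB₀ : B.Nonempty) : ∃ U, IsXD d k (m + k + n) U ∧ IsConcat k A B U := by
  obtain ⟨f, hf, hmax⟩ := A.exists_max_image Face.height hA₀
  obtain ⟨b, hb, hmin⟩ := B.exists_min_image Face.height hB₀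
  obtain ⟨C, hXD, hAC, g, hg, hgmax, hgb⟩ := hA.exists_extension hk (hB.2.1 b hb) hf hmax
    ((Finset.card_le_card Finset.sdiff_subset).trans (hA.2.1 f hf).le)
  obtain ⟨t, hadj, hheight⟩ :=
    exists_faceAdj_vadd (Finset.card_pos.1 (by rw [hXD.2.1 g hg]; exact hk)) hgb
  have hbelow : StrictlyBelow (A ∪ C) (t +ᵥ B) := by
    intro x hx _ hy'
    obtain ⟨y, hy, rfl⟩ := Finset.mem_vadd_finset.1 hy'
    have hxg := hgmax x hx
    have hby := hmin y hy
    rw [Face.height_vadd] at hheight ⊢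
    omega
  have hC : C.card = k := by
    have := hXD.1
    rw [Finset.card_union_of_disjoint hAC.disjoint, hA.1] at this
    omega
  exact ⟨_, hXD.union (hB.vadd t) hbelow hg (Finset.vadd_mem_vadd_finset hb) hadj,
    C, t, hC, hAC, hbelow, rfl⟩

theorem IsXD.exists_union_strictlyBelow (hk : 0 < k) (hkd : k ≤ d) (hA : IsXD d k n A) :
    ∃ C, IsXD d k (n + 1) (A ∪ C) ∧ StrictlyBelow A C := by
  rcases A.eq_empty_or_nonempty with rfl | hA₀
  · obtain rfl : 0 = n := hA.1
    obtain ⟨T, -, hT⟩ := Finset.exists_subset_card_eq (s := (Finset.univ : Finset (Fin d)))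
      (hkd.trans_eq (Finset.card_fin d).symm)
    exact ⟨{(T, 0)}, by simpa [hT] using isXD_singleton (T, (0 : Fin d → ℤ)),
      by simp [StrictlyBelow]⟩
  · obtain ⟨f, hf, hmax⟩ := A.exists_max_image Face.height hA₀
    obtain ⟨C, hXD, hAC, -⟩ := hA.exists_extension hk (hA.2.1 f hf) hf hmax (r := 1) (by simp)
    exact ⟨C, hXD, hAC⟩

theorem xdCount_mono (hk : 0 < k) (hkd : k ≤ d) : Monotone (xdCount d k) := by
  refine monotone_nat_of_le_succ fun n => ?_
  choose C hXD hC using fun A : {M // IsXD d k n M} => A.2.exists_union_strictlyBelow hk hkd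
  let extend (q : Quotient (xdSetoid d k n)) : Quotient (xdSetoid d k (n + 1)) :=
    ⟦⟨q.out.1 ∪ C q.out, hXD q.out⟩⟧
  rw [xdCount_eq_card_quotient, xdCount_eq_card_quotient]
  refine Nat.card_le_card_of_injective extend fun p q hpq => Quotient.out_equiv_out.1 ?_
  obtain ⟨t, ht⟩ := Quotient.exact hpq
  exact ⟨t, ((hC _).vadd_eq_and_vadd_eq (hC _) (p.out.2.1.trans q.out.2.1.symm) ht).1⟩

theorem xdCount_mul_xdCount_le (hk : 0 < k) (hm : 0 < m) (hn : 0 < n) :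
    xdCount d k m * xdCount d k n ≤ xdCount d k (m + k + n) := by
  choose U hXD hU using fun (A : {M : Finset (Face d) // IsXD d k m M}) (B : {M // IsXD d k n M}) =>
    A.2.exists_isConcat hk B.2 (Finset.card_pos.1 (hm.trans_eq A.2.1.symm))
      (Finset.card_pos.1 (hn.trans_eq B.2.1.symm))
  let concat (p : Quotient (xdSetoid d k m) × Quotient (xdSetoid d k n)) :
      Quotient (xdSetoid d k (m + k + n)) := ⟦⟨U p.1.out p.2.out, hXD _ _⟩⟧
  have hinj : Function.Injective concat := fun p q hpq => by
    obtain ⟨hA, hB⟩ := (hU _ _).transEquiv (hU _ _) (p.1.out.2.1.trans q.1.out.2.1.symm)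
      (Quotient.exact hpq)
    exact Prod.ext (Quotient.out_equiv_out.1 hA) (Quotient.out_equiv_out.1 hB)
  simp only [xdCount_eq_card_quotient, ← Nat.card_prod]
  exact Nat.card_le_card_of_injective concat hinj

theorem xdCount_growth_constant_exists_general (d k : ℕ) (hk : 0 < k) (hkd : k ≤ d) :
    ∃ μ : ℝ, 0 < μ ∧
      Tendsto (fun n : ℕ => (xdCount d k n : ℝ) ^ (1 / (n : ℝ))) atTop (nhds μ) := by
  obtain ⟨K, hK⟩ := exists_forall_xdCount_le_pow d k
  exact exists_tendsto_rpow_one_div_of_mul_le (K := K) (by simp [xdCount_zero])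
    (fun _ _ hmn => Nat.cast_le.2 (xdCount_mono hk hkd hmn))
    (fun _ _ hm hn => by exact_mod_cast xdCount_mul_xdCount_le hk hm hn)
    (fun n => by exact_mod_cast hK n)

theorem xdCount_growth_constant_exists (d k : ℕ) (hk : 1 < k) (hkd : k < d) :
    ∃ μ : ℝ, Tendsto (fun n : ℕ => (xdCount d k n : ℝ) ^ (1 / (n : ℝ))) atTop (nhds μ) := by
  obtain ⟨μ, -, hμ⟩ := xdCount_growth_constant_exists_general d k (by omega) hkd.le
  exact ⟨μ, hμ⟩
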